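/- There exists a finitely generated partially commutative group 𝔾₂ that is 2-universal: for every simplicial graph Γ and every subgroup K of 𝔾(Γ) generated by at most two elements, there is an injective group homomorphism K → 𝔾₂. (This follows since every 2-generated subgroup of any partially commutative group is free or free abelian.) -/

import Mathlib

/-- The set of commutation relators of a simplicial graph: one commutator
`[u,v]` for each pair of adjacent vertices. -/
def raagRels {V : Type*} (Γ : SimpleGraph V) : Set (FreeGroup V) :=
  {r | ∃ u v : V, Γ.Adj u v ∧
    r = FreeGroup.of u * FreeGroup.of v * (FreeGroup.of u)⁻¹ * (FreeGroup.of v)⁻¹}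

/-- The partially commutative group (right-angled Artin group) of a simplicial graph. -/
abbrev Raag {V : Type*} (Γ : SimpleGraph V) := PresentedGroup (raagRels Γ)

/-!
Delete a vertex `v` from `Γ` and let `B` be the group of the remaining graph. Then `Raag Γ` embeds
in `F(S) ⋊ B`, where `S` is the set of cosets in `B` of the subgroup generated by the neighbours
of `v`. This semidirect product acts on the Cayley tree of `F(S)`. Nielsen reduction of a pair of
automorphisms of a tree ends either in a ping-pong position or in a pair `(a, b)` such that `a`
fixes `p` and `b p` for some vertex `p`, and in the second case `a` and `b` commute as soon as their
images in `B` do. By induction, any two elements of a partially commutative group commute or freely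
generate a free group of rank two, and the group is torsion-free. So a two-generated subgroup is
free of rank two or a torsion-free abelian group of rank at most two, and both kinds embed in
`ℤ² ∗ ℤ`, the group of the graph on three vertices with a single edge.
-/

open scoped Pointwise

section FreePair

variable {G H X : Type*} [Group G] [Group H] {x y : G}

/-- The elements `x` and `y` freely generate a free group of rank two. -/
def IsFreePair (x y : G) : Prop :=
  Function.Injective (FreeGroup.lift ![x, y])

theorem lift_pair_map (f : G →* H) (x y : G) :
    FreeGroup.lift ![f x, f y] = f.comp (FreeGroup.lift ![x, y]) := by
  ext i
  fin_cases i <;> simp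

theorem IsFreePair.of_map (f : G →* H) (h : IsFreePair (f x) (f y)) : IsFreePair x y := by
  rw [IsFreePair, lift_pair_map, MonoidHom.coe_comp] at h
  exact h.of_comp

theorem IsFreePair.map (h : IsFreePair x y) {f : G →* H} (hf : Function.Injective f) :
    IsFreePair (f x) (f y) := by
  rw [IsFreePair, lift_pair_map, MonoidHom.coe_comp]
  exact hf.comp h

theorem lift_pair_surjective {u w : FreeGroup (Fin 2)}
    (h0 : FreeGroup.of 0 ∈ (FreeGroup.lift ![u, w]).range)
    (h1 : FreeGroup.of 1 ∈ (FreeGroup.lift ![u, w]).range) :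
    Function.Surjective (FreeGroup.lift ![u, w]) := by
  rw [← MonoidHom.range_eq_top, eq_top_iff, ← FreeGroup.closure_range_of, Subgroup.closure_le]
  rintro _ ⟨i, rfl⟩
  fin_cases i
  exacts [h0, h1]

theorem IsFreePair.of_lift {u w : FreeGroup (Fin 2)}
    (h : IsFreePair (FreeGroup.lift ![x, y] u) (FreeGroup.lift ![x, y] w))
    (h0 : FreeGroup.of 0 ∈ (FreeGroup.lift ![u, w]).range)
    (h1 : FreeGroup.of 1 ∈ (FreeGroup.lift ![u, w]).range) : IsFreePair x y := by
  rw [IsFreePair, lift_pair_map, MonoidHom.coe_comp] at h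
  exact h.of_comp_right (lift_pair_surjective h0 h1)

theorem isFreePair_of_ping_pong [MulAction G X] {A B : Set X} (hne : (A ∪ B).Nonempty)
    (hAB : Disjoint A B) (hx : ∀ k : ℤ, k ≠ 0 → ∀ p ∈ B, x ^ k • p ∈ A)
    (hy : ∀ k : ℤ, k ≠ 0 → ∀ p ∈ A, y ^ k • p ∈ B) : IsFreePair x y := by
  have hA : A.Nonempty := hne.elim fun p hp ↦
    hp.elim (fun h ↦ ⟨p, h⟩) fun h ↦ ⟨_, hx 1 one_ne_zero p h⟩
  have hB : B.Nonempty := hA.elim fun p hp ↦ ⟨_, hy 1 one_ne_zero p hp⟩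
  have hlift : FreeGroup.lift ![x, y] =
      (Monoid.CoprodI.lift fun i ↦ FreeGroup.lift fun _ : Unit ↦ (![x, y] : Fin 2 → G) i).comp
        (freeGroupEquivCoprodI (ι := Fin 2)).toMonoidHom := by
    ext i
    simp
  rw [IsFreePair, hlift, MonoidHom.coe_comp]
  refine .comp ?_ (MulEquiv.injective freeGroupEquivCoprodI)
  refine Monoid.CoprodI.lift_injective_of_ping_pong _ (.inr ⟨0, ?_⟩) ![A, B] ?_ ?_ ?_
  · rw [Cardinal.mk_eq_aleph0]
    exact Cardinal.natCast_le_aleph0 (n := 3)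
  · intro i
    fin_cases i
    exacts [hA, hB]
  · intro i j hij
    fin_cases i <;> fin_cases j
    exacts [absurd rfl hij, hAB, hAB.symm, absurd rfl hij]
  · intro i j hij
    refine FreeGroup.freeGroupUnitEquivInt.forall_congr_left.mpr fun k hk ↦ ?_
    have hk0 : k ≠ 0 := by
      rintro rfl
      exact hk (zpow_zero _)
    change FreeGroup.lift (fun _ ↦ ![x, y] i) (FreeGroup.of () ^ k) • ![A, B] j ⊆ ![A, B] i
    rw [map_zpow, FreeGroup.lift_apply_of, Set.smul_set_subset_iff]
    fin_cases i <;> fin_cases j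
    exacts [absurd rfl hij, hx k hk0, hy k hk0, absurd rfl hij]

theorem pow_succ_smul_mem [MulAction G X] {g : G} {A R : Set X} (hAR : Disjoint A R)
    (hg : ∀ p, p ∉ R → g • p ∈ A) (n : ℕ) {p : X} (hp : p ∉ R) : g ^ (n + 1) • p ∈ A := by
  induction n with
  | zero => simpa using hg p hp
  | succ n ih =>
    rw [pow_succ', mul_smul]
    exact hg _ (Set.disjoint_left.mp hAR ih)

theorem zpow_smul_mem_union [MulAction G X] {g : G} {A R : Set X} (hAR : Disjoint A R)
    (hg : ∀ p, p ∉ R → g • p ∈ A) {k : ℤ} (hk : k ≠ 0) {p : X} (hp : p ∉ A ∪ R) :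
    g ^ k • p ∈ A ∪ R := by
  rw [Set.mem_union, not_or] at hp
  obtain ⟨n, rfl | rfl⟩ := k.eq_nat_or_neg <;>
    obtain ⟨m, rfl⟩ := Nat.exists_eq_succ_of_ne_zero (n := n) (by simpa using hk)
  · exact .inl (by simpa only [zpow_natCast] using pow_succ_smul_mem hAR hg m hp.2)
  · refine .inr (not_not.mp fun hR ↦ hp.1 ?_)
    rw [← smul_inv_smul (g ^ (m + 1)) p]
    exact pow_succ_smul_mem hAR hg m (by simpa only [zpow_neg, zpow_natCast] using hR)

end FreePair

section Nielsen

variable {G H : Type*} [Group G] [Group H] {x y a b c d : G}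

/-- `NielsenReach x y a b` says that the pair `(a, b)` is obtained from `(x, y)` by finitely many
Nielsen moves. -/
inductive NielsenReach (x y : G) : G → G → Prop
  | refl : NielsenReach x y x y
  | swap {a b : G} : NielsenReach x y a b → NielsenReach x y b a
  | inv_left {a b : G} : NielsenReach x y a b → NielsenReach x y a⁻¹ b
  | zpow_mul {a b : G} (k : ℤ) : NielsenReach x y a b → NielsenReach x y a (a ^ k * b)

namespace NielsenReach

theorem inv_right (h : NielsenReach x y a b) : NielsenReach x y a b⁻¹ :=
  h.swap.inv_left.swap

theorem mul_zpow (h : NielsenReach x y a b) (k : ℤ) : NielsenReach x y a (b * a ^ k) := by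
  simpa using (h.inv_right.zpow_mul (-k)).inv_right

theorem trans (h : NielsenReach x y a b) (h' : NielsenReach a b c d) : NielsenReach x y c d := by
  induction h' with
  | refl => exact h
  | swap _ ih => exact ih.swap
  | inv_left _ ih => exact ih.inv_left
  | zpow_mul k _ ih => exact ih.zpow_mul k

theorem map (h : NielsenReach x y a b) (f : G →* H) : NielsenReach (f x) (f y) (f a) (f b) := by
  induction h with
  | refl => exact refl
  | swap _ ih => exact ih.swap
  | inv_left _ ih => simpa using ih.inv_left
  | zpow_mul k _ ih => simpa using ih.zpow_mul k

theorem commute_iff (h : NielsenReach x y a b) : Commute a b ↔ Commute x y := by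
  induction h with
  | refl => rfl
  | swap _ ih => rw [← ih, Commute.symm_iff]
  | inv_left _ ih => rw [Commute.inv_left_iff, ih]
  | zpow_mul k _ ih =>
    rw [← ih]
    exact ⟨fun hc ↦ by simpa using ((Commute.refl _).zpow_right (-k)).mul_right hc,
      ((Commute.refl _).zpow_right k).mul_right⟩

theorem isFreePair (h : NielsenReach x y a b) (hab : IsFreePair a b) : IsFreePair x y := by
  induction h with
  | refl => exact hab
  | swap _ ih =>
    exact ih (.of_lift (u := .of 1) (w := .of 0) (by simpa using hab)
      ⟨.of 1, by simp⟩ ⟨.of 0, by simp⟩)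
  | inv_left _ ih =>
    exact ih (.of_lift (u := (.of 0)⁻¹) (w := .of 1) (by simpa using hab)
      ⟨(.of 0)⁻¹, by simp⟩ ⟨.of 1, by simp⟩)
  | zpow_mul k _ ih =>
    exact ih (.of_lift (u := .of 0) (w := .of 0 ^ k * .of 1) (by simpa using hab)
      ⟨.of 0, by simp⟩ ⟨.of 0 ^ (-k) * .of 1, by simp⟩)

end NielsenReach

end Nielsen

/-- A simplicial tree, encoded by the path metric on its vertex set `X`: an integral geodesic
metric satisfying the four-point condition. Evenness of all perimeters is needed because the other
axioms also hold for the metric of a complete graph. -/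
structure DiscreteTree (X : Type*) where
  dist : X → X → ℕ
  dist_self (p : X) : dist p p = 0
  eq_of_dist_eq_zero {p q : X} : dist p q = 0 → p = q
  dist_comm (p q : X) : dist p q = dist q p
  four_point (a b c e : X) :
    dist a b + dist c e ≤ dist a c + dist b e ∨ dist a b + dist c e ≤ dist a e + dist b c
  exists_between {p q : X} {i : ℕ} : i ≤ dist p q → ∃ m, dist p m = i ∧ dist m q + i = dist p q
  perimeter_mod_two (a b c : X) : (dist a b + dist b c + dist a c) % 2 = 0

namespace DiscreteTree

variable {X : Type*} (T : DiscreteTree X) {a b o p q r w z : X}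

theorem dist_triangle (a b c : X) : T.dist a c ≤ T.dist a b + T.dist b c := by
  have := T.four_point a c b b
  have := T.dist_self b
  have := T.dist_comm b c
  omega

theorem dist_pos (h : p ≠ q) : 0 < T.dist p q :=
  Nat.pos_of_ne_zero fun h0 ↦ h (T.eq_of_dist_eq_zero h0)

/-- The points closer to `b` than to `a`. For adjacent `a` and `b` this is the half-tree beyond the
edge from `a` to `b`. -/
def halfSpace (a b : X) : Set X :=
  {p | T.dist p b < T.dist p a}

/-- The points `p` for which `z` lies on the geodesic from `o` to `p`. -/
def shadow (o z : X) : Set X :=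
  {p | T.dist o z + T.dist z p = T.dist o p}

variable {T}

theorem mem_halfSpace : p ∈ T.halfSpace a b ↔ T.dist p b < T.dist p a :=
  Iff.rfl

theorem notMem_halfSpace : p ∉ T.halfSpace a b ↔ T.dist p a ≤ T.dist p b := by
  rw [mem_halfSpace, not_lt]

theorem mem_shadow : p ∈ T.shadow o z ↔ T.dist o z + T.dist z p = T.dist o p :=
  Iff.rfl

theorem mem_halfSpace_or_mem_halfSpace (haq : T.dist a q = 1)
    (hqb : T.dist q b + 1 = T.dist a b) (hbr : T.dist b r = 1)
    (hra : T.dist r a + 1 = T.dist b a) (p : X) :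
    p ∈ T.halfSpace a q ∨ p ∈ T.halfSpace b r := by
  rw [mem_halfSpace, mem_halfSpace]
  have := T.perimeter_mod_two p q a
  have := T.perimeter_mod_two p r b
  have := T.four_point p q a b
  have := T.four_point p r b a
  have := T.dist_comm a q
  have := T.dist_comm b r
  have := T.dist_comm a b
  omega

theorem mem_halfSpace_of_dist_le (hoq : T.dist o q = 1) (hqw : T.dist q w + 1 ≤ T.dist o w)
    (hp : T.dist p w ≤ T.dist p o) : p ∈ T.halfSpace o q := by
  rw [mem_halfSpace]
  have := T.perimeter_mod_two p q o
  have := T.four_point p q o w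
  have := T.dist_triangle p w q
  have := T.dist_comm o q
  have := T.dist_comm q w
  omega

theorem mem_shadow_of_notMem_halfSpace (hoq : T.dist o q = 1)
    (hqw : T.dist q w + 1 = T.dist o w) (hp : p ∉ T.halfSpace o q) : p ∈ T.shadow w o := by
  rw [notMem_halfSpace] at hp
  rw [mem_shadow]
  have := T.perimeter_mod_two p q o
  have := T.four_point p q o w
  have := T.dist_triangle w o p
  have := T.dist_comm o q
  have := T.dist_comm o p
  have := T.dist_comm w o
  have := T.dist_comm w p
  omega

theorem disjoint_halfSpace_shadow (hoq : T.dist o q = 1) (hzo : z ≠ o)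
    (hz : T.dist o z ≤ T.dist q z) : Disjoint (T.halfSpace o q) (T.shadow o z) := by
  refine Set.disjoint_left.mpr fun p hp hp' ↦ ?_
  rw [mem_halfSpace] at hp
  rw [mem_shadow] at hp'
  have := T.four_point q z p o
  have := T.dist_pos hzo
  have := T.dist_comm q o
  have := T.dist_comm q p
  have := T.dist_comm z o
  have := T.dist_comm p o
  omega

theorem eq_of_mem_shadow (hd : T.dist o w = T.dist o z) (hw : p ∈ T.shadow o w)
    (hz : p ∈ T.shadow o z) : w = z := by
  rw [mem_shadow] at hw hz
  refine T.eq_of_dist_eq_zero ?_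
  have := T.four_point w z p o
  have := T.dist_comm w p
  have := T.dist_comm w o
  have := T.dist_comm z p
  have := T.dist_comm z o
  have := T.dist_comm p o
  omega

theorem four_point_basepoint (T : DiscreteTree X) (a b o p : X) :
    T.dist a b + T.dist p o ≤ T.dist p a + T.dist o b ∨
      T.dist a b + T.dist p o ≤ T.dist o a + T.dist p b := by
  have := T.four_point a b p o
  rwa [T.dist_comm a p, T.dist_comm b o, T.dist_comm a o, T.dist_comm b p] at this

theorem disjoint_halfSpace (ha : T.dist o a ≤ T.dist a b) (hb : T.dist o b ≤ T.dist a b) :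
    Disjoint (T.halfSpace o a) (T.halfSpace o b) := by
  refine Set.disjoint_left.mpr fun p hpa hpb ↦ ?_
  rw [mem_halfSpace] at hpa hpb
  have := T.four_point_basepoint a b o p
  omega

theorem disjoint_halfSpace_compl_halfSpace (ha : T.dist o a < T.dist a b)
    (hb : T.dist o b ≤ T.dist a b) : Disjoint (T.halfSpace o a) (T.halfSpace b o)ᶜ := by
  refine Set.disjoint_left.mpr fun p hpa hpb ↦ ?_
  rw [mem_halfSpace] at hpa
  rw [Set.mem_compl_iff, notMem_halfSpace] at hpb
  have := T.four_point_basepoint a b o p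
  omega

theorem disjoint_compl_halfSpace (ha : T.dist o a < T.dist a b) (hb : T.dist o b < T.dist a b) :
    Disjoint (T.halfSpace a o)ᶜ (T.halfSpace b o)ᶜ := by
  refine Set.disjoint_left.mpr fun p hpa hpb ↦ ?_
  rw [Set.mem_compl_iff, notMem_halfSpace] at hpa hpb
  have := T.four_point_basepoint a b o p
  omega

end DiscreteTree

/-- An action of `G` on the tree `T` by isometries, without inversions of edges, such that a power
`g ^ k` with `k ≠ 0` of an element `g` with a fixed point fixes no more than `g` does. -/
structure IsTreeAction (G : Type*) {X : Type*} [Group G] [MulAction G X] (T : DiscreteTree X) :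
    Prop where
  dist_smul_smul (g : G) (p q : X) : T.dist (g • p) (g • q) = T.dist p q
  smul_smul_ne {g : G} {p : X} : T.dist p (g • p) = 1 → g • g • p ≠ p
  smul_eq_of_zpow_smul_eq {g : G} {o p : X} {k : ℤ} :
    k ≠ 0 → g • o = o → g ^ k • p = p → g • p = p

namespace IsTreeAction

variable {G X : Type*} [Group G] [MulAction G X] {T : DiscreteTree X} {g x y : G} {o p q z : X}

theorem dist_smul_left (h : IsTreeAction G T) (g : G) (p q : X) :
    T.dist (g • p) q = T.dist p (g⁻¹ • q) := by
  rw [← h.dist_smul_smul g p, smul_inv_smul]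

theorem dist_inv_smul_self (h : IsTreeAction G T) (g : G) (o : X) :
    T.dist o (g⁻¹ • o) = T.dist o (g • o) := by
  rw [← h.dist_smul_left, T.dist_comm]

theorem smul_mem_shadow (h : IsTreeAction G T) :
    g • p ∈ T.shadow (g • o) (g • z) ↔ p ∈ T.shadow o z := by
  simp only [DiscreteTree.mem_shadow, h.dist_smul_smul]

/-- If `g` translates `o` by `n` but the displacement of `o` under `g ^ 2` is at most `n`, then the
midpoint of `o` and `g • o` is fixed. -/
theorem exists_smul_eq_of_dist_le (h : IsTreeAction G T)
    (hle : T.dist (g • o) (g⁻¹ • o) ≤ T.dist o (g • o)) : ∃ q : X, g • q = q := by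
  obtain ⟨q, hq, hq'⟩ := T.exists_between (Nat.div_le_self (T.dist o (g • o)) 2)
  have hinv := h.dist_inv_smul_self g o
  have := T.perimeter_mod_two o (g • o) (g⁻¹ • o)
  have : T.dist (g • q) o = T.dist q (g⁻¹ • o) := h.dist_smul_left g q o
  have : T.dist (g • q) (g • o) = T.dist q o := h.dist_smul_smul g q o
  have : T.dist (g⁻¹ • q) o = T.dist q (g • o) := by rw [h.dist_smul_left, inv_inv]
  have : T.dist (g⁻¹ • q) (g⁻¹ • o) = T.dist q o := h.dist_smul_smul _ _ _
  have := T.dist_comm o q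
  have := T.dist_comm (g • o) (g⁻¹ • o)
  have := T.dist_comm o (g⁻¹ • o)
  have := T.dist_comm o (g • o)
  have := T.four_point q (g⁻¹ • o) o (g • o)
  have := T.four_point q (g • q) o (g • o)
  have := T.four_point (g • q) (g⁻¹ • o) o (g • o)
  have := T.four_point (g⁻¹ • q) (g • q) o (g⁻¹ • o)
  by_contra! hfix
  have := T.dist_pos (hfix q).symm
  have hinvert : g⁻¹ • q = g • q := T.eq_of_dist_eq_zero (by omega)
  exact h.smul_smul_ne (g := g) (p := q) (by omega) (by rw [← hinvert, smul_inv_smul])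

theorem dist_lt_dist_inv_smul (h : IsTreeAction G T) (hg : ∀ p : X, g • p ≠ p) (o : X) :
    T.dist o (g • o) < T.dist (g • o) (g⁻¹ • o) := by
  by_contra! hle
  obtain ⟨p, hp⟩ := h.exists_smul_eq_of_dist_le hle
  exact hg p hp

theorem zpow_smul_ne (h : IsTreeAction G T) (ho : g • o = o) (hp : g • p ≠ p) {k : ℤ}
    (hk : k ≠ 0) : g ^ k • p ≠ p :=
  fun hkp ↦ hp (h.smul_eq_of_zpow_smul_eq hk ho hkp)

theorem smul_notMem_halfSpace (h : IsTreeAction G T) (ho : g • o = o) (hq : g • q ≠ q)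
    (hoq : T.dist o q = 1) (hp : p ∈ T.halfSpace o q) : g • p ∉ T.halfSpace o q := by
  intro hp'
  have ho' : g⁻¹ • o = o := by rw [inv_smul_eq_iff, ho]
  rw [DiscreteTree.mem_halfSpace] at hp
  rw [DiscreteTree.mem_halfSpace, h.dist_smul_left, h.dist_smul_left, ho'] at hp'
  have : T.dist (g⁻¹ • q) o = T.dist q o := by rw [h.dist_smul_left, inv_inv, ho]
  have := T.four_point q (g⁻¹ • q) p o
  have := T.dist_comm p q
  have := T.dist_comm p (g⁻¹ • q)
  have := T.dist_comm o q
  have hfix : g⁻¹ • q = q := (T.eq_of_dist_eq_zero (by omega)).symm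
  exact hq (inv_smul_eq_iff.mp hfix).symm

theorem zpow_smul_notMem_halfSpace (h : IsTreeAction G T) (ho : g • o = o) (hq : g • q ≠ q)
    (hoq : T.dist o q = 1) {k : ℤ} (hk : k ≠ 0) (hp : p ∈ T.halfSpace o q) :
    g ^ k • p ∉ T.halfSpace o q :=
  h.smul_notMem_halfSpace (MulAction.mem_fixedBy_zpow ho k) (h.zpow_smul_ne ho hq hk) hoq hp

theorem isFreePair_of_fixed_fixed (h : IsTreeAction G T) {o o' : X} (ho : x • o = o)
    (ho' : y • o' = o') (hxy : ∀ p : X, x • p = p → y • p ≠ p) : IsFreePair x y := by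
  obtain ⟨⟨a, b⟩, hab⟩ := exists_minimalFor_of_wellFoundedLT
    (fun c : X × X ↦ x • c.1 = c.1 ∧ y • c.2 = c.2) (fun c ↦ T.dist c.1 c.2) ⟨(o, o'), ho, ho'⟩
  obtain ⟨ha, hb⟩ : x • a = a ∧ y • b = b := hab.prop
  have hpos : 0 < T.dist a b := T.dist_pos fun h0 ↦ hxy a ha (h0 ▸ hb)
  obtain ⟨q, haq, hqb⟩ := T.exists_between hpos
  obtain ⟨r, hbr, hra⟩ := T.exists_between (T.dist_comm a b ▸ hpos)
  have hxq : x • q ≠ q := fun hq ↦ by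
    have : T.dist a b ≤ T.dist q b := hab.le (j := (q, b)) ⟨hq, hb⟩
    omega
  have hyr : y • r ≠ r := fun hr ↦ by
    have : T.dist a b ≤ T.dist a r := hab.le (j := (a, r)) ⟨ha, hr⟩
    rw [T.dist_comm a b, T.dist_comm a r] at this
    omega
  have hcover := DiscreteTree.mem_halfSpace_or_mem_halfSpace haq hqb hbr hra
  refine isFreePair_of_ping_pong (A := (T.halfSpace a q)ᶜ) (B := (T.halfSpace b r)ᶜ)
    ⟨a, .inl ?_⟩ ?_ ?_ ?_
  · simp [DiscreteTree.mem_halfSpace, T.dist_self]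
  · exact Set.disjoint_left.mpr fun p hp hp' ↦ (hcover p).elim hp hp'
  · exact fun k hk p hp ↦
      h.zpow_smul_notMem_halfSpace ha hxq haq hk ((hcover p).resolve_right hp)
  · exact fun k hk p hp ↦
      h.zpow_smul_notMem_halfSpace hb hyr hbr hk ((hcover p).resolve_left hp)

/-- The union of the attracting half-space `{p | d(p, g o) < d(p, o)}` and the repelling half-space
`{p | d(p, g⁻¹ o) ≤ d(p, o)}` of `g` with respect to the base point `o`. -/
def pingPongSet (T : DiscreteTree X) (g : G) (o : X) : Set X :=
  T.halfSpace o (g • o) ∪ (T.halfSpace (g⁻¹ • o) o)ᶜ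

theorem zpow_smul_mem_pingPongSet (h : IsTreeAction G T)
    (hg : T.dist o (g • o) < T.dist (g • o) (g⁻¹ • o)) {k : ℤ} (hk : k ≠ 0)
    (hp : p ∉ pingPongSet T g o) : g ^ k • p ∈ pingPongSet T g o := by
  refine zpow_smul_mem_union ?_ (fun p hp ↦ ?_) hk hp
  · exact DiscreteTree.disjoint_halfSpace_compl_halfSpace hg (h.dist_inv_smul_self g o ▸ hg.le)
  · rw [Set.mem_compl_iff, not_not, DiscreteTree.mem_halfSpace] at hp
    rwa [DiscreteTree.mem_halfSpace, h.dist_smul_smul, h.dist_smul_left]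

theorem isFreePair_of_forall_dist_le (h : IsTreeAction G T) (ho : x • o = o) (hxq : x • q ≠ q)
    (hoq : T.dist o q = 1) (hqy : T.dist q (y • o) + 1 = T.dist o (y • o))
    (hxy : x • y⁻¹ • o ≠ y⁻¹ • o)
    (hle : ∀ k : ℤ, T.dist o (y • o) ≤ T.dist q (x ^ k • y⁻¹ • o)) : IsFreePair x y := by
  have hxo (k : ℤ) : x ^ k • o = o := MulAction.mem_fixedBy_zpow ho k
  have hdist (k : ℤ) : T.dist o (x ^ k • y⁻¹ • o) = T.dist o (y • o) := by
    rw [← h.dist_inv_smul_self y, ← h.dist_smul_smul (x ^ k) o (y⁻¹ • o), hxo]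
  have hshadow {k : ℤ} {p : X} (hp : p ∈ T.shadow o (y⁻¹ • o)) :
      x ^ k • p ∈ T.shadow o (x ^ k • y⁻¹ • o) := by
    simpa only [hxo] using (h.smul_mem_shadow (g := x ^ k)).mpr hp
  have hR {p : X} (hp : y • p ∉ T.halfSpace o q) : p ∈ T.shadow o (y⁻¹ • o) := by
    refine (h.smul_mem_shadow (g := y)).mp ?_
    rw [smul_inv_smul]
    exact DiscreteTree.mem_shadow_of_notMem_halfSpace hoq hqy hp
  have hdisj (k : ℤ) : Disjoint (T.halfSpace o q) (T.shadow o (x ^ k • y⁻¹ • o)) := by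
    refine DiscreteTree.disjoint_halfSpace_shadow hoq (fun h0 ↦ ?_) ((hdist k).trans_le (hle k))
    have := hdist k
    rw [h0, T.dist_self] at this
    omega
  have hAR : Disjoint (T.halfSpace o q) {p | y • p ∉ T.halfSpace o q} :=
    (hdisj 0).mono_right fun p hp ↦ by simpa using hR hp
  refine isFreePair_of_ping_pong (A := (T.halfSpace o q ∪ {p | y • p ∉ T.halfSpace o q})ᶜ)
    (B := T.halfSpace o q ∪ {p | y • p ∉ T.halfSpace o q})
    ⟨o, (em' _)⟩ disjoint_compl_left ?_
    fun k hk p hp ↦ zpow_smul_mem_union hAR (fun p hp ↦ not_not.mp hp) hk hp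
  rintro k hk p (hp | hp) (hkp | hkp)
  · exact h.zpow_smul_notMem_halfSpace ho hxq hoq hk hp hkp
  · refine Set.disjoint_left.mp (hdisj (-k)) hp ?_
    simpa using hshadow (k := -k) (hR hkp)
  · exact Set.disjoint_left.mp (hdisj k) hkp (hshadow (hR hp))
  · refine h.zpow_smul_ne ho hxy hk (DiscreteTree.eq_of_mem_shadow ?_ (hshadow (hR hp)) (hR hkp))
    rw [hdist, h.dist_inv_smul_self]

theorem isFreePair_of_dist_lt (h : IsTreeAction G T) (ho : x • o = o) (hxq : x • q ≠ q)
    (hoq : T.dist o q = 1) (hqy : T.dist q (y • o) + 1 = T.dist o (y • o))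
    (hqy' : T.dist q (y⁻¹ • o) < T.dist o (y • o)) (hy : ∀ p : X, y • p ≠ p) :
    IsFreePair x y := by
  have hsubset {p : X} (hp : p ∈ pingPongSet T y o) : p ∈ T.halfSpace o q := by
    rcases hp with hp | hp
    · exact DiscreteTree.mem_halfSpace_of_dist_le hoq hqy.le (DiscreteTree.mem_halfSpace.mp hp).le
    · refine DiscreteTree.mem_halfSpace_of_dist_le hoq (w := y⁻¹ • o) ?_
        (DiscreteTree.notMem_halfSpace.mp hp)
      rw [h.dist_inv_smul_self]
      exact hqy'
  exact isFreePair_of_ping_pong (A := (pingPongSet T y o)ᶜ) (B := pingPongSet T y o)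
    ⟨o, em' _⟩ disjoint_compl_left
    (fun k hk p hp hkp ↦
      h.zpow_smul_notMem_halfSpace ho hxq hoq hk (hsubset hp) (hsubset hkp))
    fun k hk p hp ↦ h.zpow_smul_mem_pingPongSet (h.dist_lt_dist_inv_smul hy o) hk hp

/-- Among the fixed points of `x` choose `a` minimizing `d(a, y a)`; then `m` is the last fixed
point of `x` on the geodesic from `a` to `y a`. -/
theorem exists_exit_edge (h : IsTreeAction G T) (ho : x • o = o)
    (hxy : ∀ p : X, x • p = p → x • y • p ≠ y • p) :
    ∃ m q : X, x • m = m ∧ x • q ≠ q ∧ T.dist m q = 1 ∧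
      T.dist q (y • m) + 1 = T.dist m (y • m) := by
  obtain ⟨a, ha⟩ := exists_minimalFor_of_wellFoundedLT
    (fun p : X ↦ x • p = p) (fun p ↦ T.dist p (y • p)) ⟨o, ho⟩
  obtain ⟨m, hm⟩ := exists_minimalFor_of_wellFoundedLT
    (fun p : X ↦ x • p = p ∧ T.dist a p + T.dist p (y • a) = T.dist a (y • a))
    (fun p ↦ T.dist p (y • a)) ⟨a, ha.prop, by rw [T.dist_self, zero_add]⟩
  obtain ⟨hxm, ham⟩ := hm.prop
  have hpos : 0 < T.dist m (y • a) := T.dist_pos fun h0 ↦ hxy a ha.prop (h0 ▸ hxm)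
  obtain ⟨q, hmq, hqa⟩ := T.exists_between hpos
  have hxq : x • q ≠ q := fun hq ↦ by
    have := T.dist_triangle a m q
    have := T.dist_triangle a q (y • a)
    have : T.dist m (y • a) ≤ T.dist q (y • a) := hm.le ⟨hq, by omega⟩
    omega
  refine ⟨m, q, hxm, hxq, hmq, ?_⟩
  have : T.dist a (y • a) ≤ T.dist m (y • m) := ha.le hxm
  have := h.dist_smul_smul y a m
  have := T.dist_triangle m (y • a) (y • m)
  have := T.dist_triangle q (y • a) (y • m)
  have := T.dist_triangle m q (y • m)
  omega

theorem isFreePair_of_fixed_left (h : IsTreeAction G T) (ho : x • o = o)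
    (hxy : ∀ p : X, x • p = p → x • y • p ≠ y • p)
    (hy : ∀ (k : ℤ) (p : X), (y * x ^ k) • p ≠ p) : IsFreePair x y := by
  obtain ⟨m, q, hm, hq, hmq, hqy⟩ := h.exists_exit_edge ho hxy
  by_cases hle : ∀ k : ℤ, T.dist m (y • m) ≤ T.dist q (x ^ k • y⁻¹ • m)
  · refine h.isFreePair_of_forall_dist_le hm hq hmq hqy (fun hfix ↦ ?_) hle
    exact hxy _ hfix (by rw [smul_inv_smul, hm])
  · push Not at hle
    obtain ⟨k, hk⟩ := hle
    have hm' : (y * x ^ (-k)) • m = y • m := by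
      rw [mul_smul, MulAction.mem_fixedBy.mp (MulAction.mem_fixedBy_zpow hm (-k))]
    have hm'' : (y * x ^ (-k))⁻¹ • m = x ^ k • y⁻¹ • m := by
      rw [mul_inv_rev, mul_smul, zpow_neg, inv_inv]
    exact (NielsenReach.refl.mul_zpow (-k)).isFreePair
      (h.isFreePair_of_dist_lt hm hq hmq (by rw [hm', hqy]) (by rwa [hm', hm'']) (hy (-k)))

/-- No pair Nielsen equivalent to `(x, y)` has an elliptic member, and the total displacement
`d(o, x o) + d(o, y o)` is minimal among all Nielsen equivalent pairs and all base points. -/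
structure IsMinimalPair (T : DiscreteTree X) (x y : G) (o : X) : Prop where
  smul_ne {a b : G} : NielsenReach x y a b → ∀ p : X, a • p ≠ p
  le {a b : G} : NielsenReach x y a b → ∀ p : X,
    T.dist o (x • o) + T.dist o (y • o) ≤ T.dist p (a • p) + T.dist p (b • p)

namespace IsMinimalPair

theorem swap (hm : IsMinimalPair T x y o) : IsMinimalPair T y x o where
  smul_ne hab := hm.smul_ne (NielsenReach.refl.swap.trans hab)
  le hab p := by
    rw [add_comm]
    exact hm.le (NielsenReach.refl.swap.trans hab) p

theorem inv_left (hm : IsMinimalPair T x y o) (h : IsTreeAction G T) :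
    IsMinimalPair T x⁻¹ y o where
  smul_ne hab := hm.smul_ne (NielsenReach.refl.inv_left.trans hab)
  le hab p := by
    rw [h.dist_inv_smul_self]
    exact hm.le (NielsenReach.refl.inv_left.trans hab) p

theorem inv_right (hm : IsMinimalPair T x y o) (h : IsTreeAction G T) :
    IsMinimalPair T x y⁻¹ o :=
  (hm.swap.inv_left h).swap

theorem dist_lt_left (hm : IsMinimalPair T x y o) (h : IsTreeAction G T) :
    T.dist o (x • o) < T.dist (x • o) (x⁻¹ • o) :=
  h.dist_lt_dist_inv_smul (hm.smul_ne .refl) o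

theorem dist_le_right (hm : IsMinimalPair T x y o) (h : IsTreeAction G T) :
    T.dist o (y • o) ≤ T.dist (x • o) (y • o) := by
  have := hm.le (NielsenReach.refl.zpow_mul (-1)) o
  rwa [zpow_neg_one, mul_smul, ← h.dist_smul_left, add_le_add_iff_left] at this

theorem dist_lt_or_dist_lt_inv_left (hm : IsMinimalPair T x y o) (h : IsTreeAction G T) :
    T.dist o (y • o) < T.dist (x • o) (y • o) ∨ T.dist o (y • o) < T.dist (x⁻¹ • o) (y • o) := by
  have := hm.dist_lt_left h
  have := T.four_point (x • o) (x⁻¹ • o) o (y • o)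
  have := h.dist_inv_smul_self x o
  have := T.dist_comm o (x • o)
  have := T.dist_comm o (x⁻¹ • o)
  omega

end IsMinimalPair

/-- If `[o, x o]` and `[o, y o]` share half of `[o, x o]`, and `[o, x⁻¹ o]` and `[o, y⁻¹ o]` share
half of `[o, x⁻¹ o]`, then `x⁻¹ y` moves the midpoint of `[o, x⁻¹ o]` by less than `y` moves `o`. -/
theorem exists_dist_add_dist_lt (h : IsTreeAction G T)
    (hxy : T.dist o (x • o) ≤ T.dist o (y • o)) (hpos : 0 < T.dist o (x • o))
    (hdist : T.dist (x • o) (y • o) = T.dist o (y • o))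
    (hdist' : T.dist (x⁻¹ • o) (y⁻¹ • o) ≤ T.dist o (y • o)) :
    ∃ q : X, T.dist q (x • q) + T.dist q ((x⁻¹ * y) • q) <
      T.dist o (x • o) + T.dist o (y • o) := by
  have hx := h.dist_inv_smul_self x o
  have hy := h.dist_inv_smul_self y o
  obtain ⟨q, hq, hq'⟩ :=
    T.exists_between (hx ▸ Nat.div_le_self _ 2 : T.dist o (x • o) / 2 ≤ T.dist o (x⁻¹ • o))
  refine ⟨q, ?_⟩
  have := T.perimeter_mod_two o (x • o) (y • o)
  have : T.dist (x • q) (x • o) = T.dist q o := h.dist_smul_smul _ _ _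
  have : T.dist (x • q) o = T.dist q (x⁻¹ • o) := h.dist_smul_left _ _ _
  have : T.dist (y • q) (y • o) = T.dist q o := h.dist_smul_smul _ _ _
  have : T.dist (y • q) o = T.dist q (y⁻¹ • o) := h.dist_smul_left _ _ _
  have : T.dist (x • q) (y • q) = T.dist q ((x⁻¹ * y) • q) := by rw [h.dist_smul_left, mul_smul]
  have := T.dist_comm o q
  have := T.dist_comm (x⁻¹ • o) (y⁻¹ • o)
  have := T.dist_comm o (x • q)
  have := T.dist_comm o (y⁻¹ • o)
  have := T.dist_comm (x • o) (y • o)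
  have := T.dist_comm o (y • o)
  have := T.four_point q (y⁻¹ • o) o (x⁻¹ • o)
  have := T.four_point (x • q) (y • o) o (x • o)
  have := T.four_point (x • q) (y • q) o (y • o)
  have := T.dist_triangle q o (x • q)
  omega

namespace IsMinimalPair

theorem dist_lt_or_dist_lt_inv_inv (hm : IsMinimalPair T x y o) (h : IsTreeAction G T)
    (hle : T.dist o (x • o) ≤ T.dist o (y • o)) :
    T.dist o (y • o) < T.dist (x • o) (y • o) ∨
      T.dist o (y • o) < T.dist (x⁻¹ • o) (y⁻¹ • o) := by
  by_contra! htie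
  have hpos : 0 < T.dist o (x • o) := T.dist_pos (hm.smul_ne .refl o).symm
  obtain ⟨q, hq⟩ := h.exists_dist_add_dist_lt hle hpos
    (htie.1.antisymm (hm.dist_le_right h)) htie.2
  have := hm.le (NielsenReach.refl.zpow_mul (-1)) q
  rw [zpow_neg_one] at this
  omega

theorem isFreePair_of_dist_lt (hm : IsMinimalPair T x y o) (h : IsTreeAction G T)
    (hle : T.dist o (x • o) ≤ T.dist o (y • o))
    (hx'y : T.dist o (y • o) < T.dist (x⁻¹ • o) (y • o))
    (hx'y' : T.dist o (y • o) < T.dist (x⁻¹ • o) (y⁻¹ • o))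
    (hxy' : T.dist o (x • o) < T.dist (x • o) (y⁻¹ • o)) : IsFreePair x y := by
  have hx := h.dist_inv_smul_self x o
  have hy := h.dist_inv_smul_self y o
  have hxy : T.dist o (y • o) ≤ T.dist (x • o) (y • o) := hm.dist_le_right h
  have hxy'' : T.dist o (y⁻¹ • o) ≤ T.dist (x • o) (y⁻¹ • o) :=
    (hm.inv_right h).dist_le_right h
  have := T.dist_comm (x⁻¹ • o) (y • o)
  have hdisj : Disjoint (pingPongSet T x o) (pingPongSet T y o) := by
    refine Set.disjoint_union_left.mpr ⟨Set.disjoint_union_right.mpr ⟨?_, ?_⟩,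
      Set.disjoint_union_right.mpr ⟨?_, ?_⟩⟩
    · exact DiscreteTree.disjoint_halfSpace (by omega) (by omega)
    · exact DiscreteTree.disjoint_halfSpace_compl_halfSpace (by omega) (by omega)
    · exact (DiscreteTree.disjoint_halfSpace_compl_halfSpace (by omega) (by omega)).symm
    · exact DiscreteTree.disjoint_compl_halfSpace (by omega) (by omega)
  refine isFreePair_of_ping_pong (B := pingPongSet T y o) (A := pingPongSet T x o)
    ⟨x • o, .inl (.inl ?_)⟩ hdisj
    (fun k hk p hp ↦ h.zpow_smul_mem_pingPongSet (hm.dist_lt_left h) hk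
      (Set.disjoint_right.mp hdisj hp))
    (fun k hk p hp ↦ h.zpow_smul_mem_pingPongSet (hm.swap.dist_lt_left h) hk
      (Set.disjoint_left.mp hdisj hp))
  rw [DiscreteTree.mem_halfSpace, T.dist_self, T.dist_comm]
  exact T.dist_pos (hm.smul_ne .refl o).symm

theorem isFreePair_of_inv_left_dist_lt (hm : IsMinimalPair T x y o) (h : IsTreeAction G T)
    (hle : T.dist o (x • o) ≤ T.dist o (y • o))
    (hx'y : T.dist o (y • o) < T.dist (x⁻¹ • o) (y • o))
    (hx'y' : T.dist o (y • o) < T.dist (x⁻¹ • o) (y⁻¹ • o)) : IsFreePair x y := by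
  by_cases hxy' : T.dist o (x • o) < T.dist (x • o) (y⁻¹ • o)
  · exact hm.isFreePair_of_dist_lt h hle hx'y hx'y' hxy'
  · have hy := h.dist_inv_smul_self y o
    have := (hm.inv_right h).dist_le_right h
    have hor := hm.swap.dist_lt_or_dist_lt_inv_left h
    rw [T.dist_comm (y • o), T.dist_comm (y⁻¹ • o)] at hor
    refine NielsenReach.refl.inv_right.isFreePair ((hm.inv_right h).isFreePair_of_dist_lt h
      (by omega) (by omega) ?_ ?_)
    · rwa [inv_inv, hy]
    · rw [inv_inv]
      exact hor.resolve_right hxy'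

theorem isFreePair_of_dist_le (hm : IsMinimalPair T x y o) (h : IsTreeAction G T)
    (hle : T.dist o (x • o) ≤ T.dist o (y • o)) : IsFreePair x y := by
  have hx := h.dist_inv_smul_self x o
  have hy := h.dist_inv_smul_self y o
  have h₁ := hm.dist_lt_or_dist_lt_inv_left h
  have h₂ := hm.dist_lt_or_dist_lt_inv_inv h hle
  have h₃ := (hm.inv_right h).dist_lt_or_dist_lt_inv_left h
  have h₄ := (hm.inv_right h).dist_lt_or_dist_lt_inv_inv h (hle.trans_eq hy.symm)
  rw [hy] at h₃ h₄
  rw [inv_inv] at h₄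
  by_cases hstrict : T.dist o (y • o) < T.dist (x⁻¹ • o) (y • o) ∧
      T.dist o (y • o) < T.dist (x⁻¹ • o) (y⁻¹ • o)
  · exact hm.isFreePair_of_inv_left_dist_lt h hle hstrict.1 hstrict.2
  · refine NielsenReach.refl.inv_left.isFreePair
      ((hm.inv_left h).isFreePair_of_inv_left_dist_lt h (hx.trans_le hle) ?_ ?_) <;>
      rw [inv_inv] <;> tauto

theorem isFreePair (hm : IsMinimalPair T x y o) (h : IsTreeAction G T) : IsFreePair x y := by
  rcases le_total (T.dist o (x • o)) (T.dist o (y • o)) with hle | hle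
  · exact hm.isFreePair_of_dist_le h hle
  · exact NielsenReach.refl.swap.isFreePair (hm.swap.isFreePair_of_dist_le h hle)

end IsMinimalPair

theorem isFreePair_of_forall_smul_ne [Nonempty X] (h : IsTreeAction G T)
    (hne : ∀ a b, NielsenReach x y a b → ∀ p : X, a • p ≠ p) : IsFreePair x y := by
  obtain ⟨o⟩ := ‹Nonempty X›
  obtain ⟨⟨⟨a, b⟩, o⟩, hmin⟩ := exists_minimalFor_of_wellFoundedLT
    (fun c : (G × G) × X ↦ NielsenReach x y c.1.1 c.1.2)
    (fun c ↦ T.dist c.2 (c.1.1 • c.2) + T.dist c.2 (c.1.2 • c.2)) ⟨((x, y), o), .refl⟩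
  have hm : IsMinimalPair T a b o :=
    { smul_ne := fun hab ↦ hne _ _ (hmin.prop.trans hab)
      le := fun {c d} hcd p ↦ hmin.le (j := ((c, d), p)) (hmin.prop.trans hcd) }
  exact hmin.prop.isFreePair (hm.isFreePair h)

theorem isFreePair_of_forall_smul_smul_ne [Nonempty X] (h : IsTreeAction G T)
    (hfix : ∀ a b, NielsenReach x y a b → ∀ p : X, a • p = p → a • b • p ≠ b • p) :
    IsFreePair x y := by
  by_cases hell : ∃ a b, NielsenReach x y a b ∧ ∃ p : X, a • p = p
  · obtain ⟨a, b, hab, o, ho⟩ := hell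
    refine hab.isFreePair ?_
    by_cases hell' : ∃ (k : ℤ) (p : X), (b * a ^ k) • p = p
    · obtain ⟨k, o', ho'⟩ := hell'
      refine (NielsenReach.refl.mul_zpow k).isFreePair
        (h.isFreePair_of_fixed_fixed ho ho' fun p hp hp' ↦ ?_)
      exact hfix _ _ (hab.mul_zpow k) p hp (by rw [hp', hp])
    · push Not at hell'
      exact h.isFreePair_of_fixed_left ho (hfix a b hab) hell'
  · push Not at hell
    exact h.isFreePair_of_forall_smul_ne hell

end IsTreeAction

section CommonPrefix

variable {α : Type*} [DecidableEq α]

/-- The length of the longest common prefix of two lists. -/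
def commonPrefixLength : List α → List α → ℕ
  | [], _ => 0
  | _ :: _, [] => 0
  | a :: l, b :: m => if a = b then commonPrefixLength l m + 1 else 0

theorem commonPrefixLength_nil_left (l : List α) : commonPrefixLength [] l = 0 := by
  rw [commonPrefixLength]

theorem commonPrefixLength_nil_right (l : List α) : commonPrefixLength l [] = 0 := by
  cases l <;> rw [commonPrefixLength]

theorem commonPrefixLength_cons_self (a : α) (l m : List α) :
    commonPrefixLength (a :: l) (a :: m) = commonPrefixLength l m + 1 := by
  simp only [commonPrefixLength, if_true]

theorem commonPrefixLength_cons_of_ne {a b : α} (hab : a ≠ b) (l m : List α) :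
    commonPrefixLength (a :: l) (b :: m) = 0 := by
  simp only [commonPrefixLength, if_neg hab]

theorem commonPrefixLength_comm (l m : List α) :
    commonPrefixLength l m = commonPrefixLength m l := by
  fun_induction commonPrefixLength l m <;>
    grind [commonPrefixLength, commonPrefixLength_nil_right]

theorem min_commonPrefixLength_le (l m n : List α) :
    min (commonPrefixLength l m) (commonPrefixLength m n) ≤ commonPrefixLength l n := by
  induction l generalizing m n with
  | nil => simp [commonPrefixLength_nil_left]
  | cons a l ih =>
    cases m with
    | nil => simp [commonPrefixLength_nil_right]
    | cons b m =>
      cases n with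
      | nil => simp [commonPrefixLength_nil_right]
      | cons c n => grind [commonPrefixLength]

end CommonPrefix

section CayleyTree

variable {S : Type*}

/-- The exponent sum homomorphism, sending every generator to `1 : ℤ`. -/
def exponentSum (S : Type*) : FreeGroup S →* Multiplicative ℤ :=
  FreeGroup.lift fun _ ↦ Multiplicative.ofAdd 1

theorem freeGroup_mk_cons (a : S × Bool) (l : List (S × Bool)) :
    FreeGroup.mk (a :: l) = FreeGroup.mk [a] * FreeGroup.mk l := by
  rw [FreeGroup.mul_mk, List.singleton_append]

theorem length_sub_exponentSum_mk_mod_two (l : List (S × Bool)) :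
    ((l.length : ℤ) - (exponentSum S (FreeGroup.mk l)).toAdd) % 2 = 0 := by
  induction l with
  | nil => simp [← FreeGroup.one_eq_mk]
  | cons a l ih =>
    have hletter : (exponentSum S (FreeGroup.mk [a])).toAdd = 1 ∨
        (exponentSum S (FreeGroup.mk [a])).toAdd = -1 := by
      obtain ⟨s, _ | _⟩ := a <;> simp [exponentSum]
    rw [freeGroup_mk_cons, map_mul, toAdd_mul, List.length_cons]
    omega

theorem isReduced_invRev_append_cons {a b : S × Bool} {l m : List (S × Bool)}
    (hl : FreeGroup.IsReduced (a :: l)) (hm : FreeGroup.IsReduced (b :: m)) (hab : a ≠ b) :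
    FreeGroup.IsReduced (FreeGroup.invRev (a :: l) ++ b :: m) := by
  classical
  have hrev : FreeGroup.IsReduced (FreeGroup.invRev (a :: l)) := by
    rw [FreeGroup.isReduced_iff_reduce_eq, FreeGroup.reduce_invRev, hl.reduce_eq]
  refine List.IsChain.append hrev hm fun u hu v hv ↦ ?_
  simp only [FreeGroup.invRev, List.map_cons, List.reverse_cons, List.getLast?_append,
    List.getLast?_singleton, Option.some_or, Option.mem_def, Option.some.injEq,
    List.head?_cons] at hu hv
  subst hu hv
  exact fun hfst ↦ by_contra fun hsnd ↦ hab (Prod.ext hfst (Bool.not_not_eq.1 hsnd))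

variable [DecidableEq S]

theorem freeGroup_norm_sub_exponentSum_mod_two (u : FreeGroup S) :
    ((u.norm : ℤ) - (exponentSum S u).toAdd) % 2 = 0 := by
  simpa only [FreeGroup.mk_toWord, FreeGroup.norm] using length_sub_exponentSum_mk_mod_two u.toWord

theorem freeGroup_norm_mk {l : List (S × Bool)} (hl : FreeGroup.IsReduced l) :
    (FreeGroup.mk l).norm = l.length := by
  rw [FreeGroup.norm, FreeGroup.toWord_mk, hl.reduce_eq]

theorem freeGroup_norm_inv_mk_mul_mk {l m : List (S × Bool)} (hl : FreeGroup.IsReduced l)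
    (hm : FreeGroup.IsReduced m) :
    ((FreeGroup.mk l)⁻¹ * FreeGroup.mk m).norm + 2 * commonPrefixLength l m =
      l.length + m.length := by
  induction l generalizing m with
  | nil => simp [← FreeGroup.one_eq_mk, freeGroup_norm_mk hm, commonPrefixLength_nil_left]
  | cons a l ih =>
    cases m with
    | nil =>
      rw [← FreeGroup.one_eq_mk, mul_one, FreeGroup.norm_inv_eq, freeGroup_norm_mk hl,
        commonPrefixLength_nil_right, mul_zero, List.length_nil]
    | cons b m =>
      obtain rfl | hab := eq_or_ne a b
      · have hcancel : (FreeGroup.mk (a :: l))⁻¹ * FreeGroup.mk (a :: m) =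
            (FreeGroup.mk l)⁻¹ * FreeGroup.mk m := by
          rw [freeGroup_mk_cons a l, freeGroup_mk_cons a m]
          group
        have := ih (List.isChain_cons.1 hl).2 (List.isChain_cons.1 hm).2
        rw [hcancel, commonPrefixLength_cons_self, List.length_cons, List.length_cons]
        omega
      · rw [FreeGroup.inv_mk, FreeGroup.mul_mk,
          freeGroup_norm_mk (isReduced_invRev_append_cons hl hm hab),
          commonPrefixLength_cons_of_ne hab, List.length_append, FreeGroup.invRev_length,
          mul_zero, add_zero]

theorem freeGroup_norm_inv_mul (u v : FreeGroup S) :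
    (u⁻¹ * v).norm + 2 * commonPrefixLength u.toWord v.toWord = u.norm + v.norm := by
  have := freeGroup_norm_inv_mk_mul_mk (l := u.toWord) (m := v.toWord)
    FreeGroup.isReduced_toWord FreeGroup.isReduced_toWord
  rwa [FreeGroup.mk_toWord, FreeGroup.mk_toWord] at this

theorem freeGroup_norm_inv_mul_comm (u v : FreeGroup S) : (u⁻¹ * v).norm = (v⁻¹ * u).norm := by
  rw [← FreeGroup.norm_inv_eq, mul_inv_rev, inv_inv]

theorem freeGroup_norm_inv_mul_add_norm_le (a b c : FreeGroup S) :
    (a⁻¹ * b).norm + c.norm ≤ (a⁻¹ * c).norm + b.norm ∨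
      (a⁻¹ * b).norm + c.norm ≤ a.norm + (b⁻¹ * c).norm := by
  have := freeGroup_norm_inv_mul a b
  have := freeGroup_norm_inv_mul a c
  have := freeGroup_norm_inv_mul b c
  have := min_commonPrefixLength_le a.toWord c.toWord b.toWord
  have := commonPrefixLength_comm c.toWord b.toWord
  omega

theorem exists_mul_eq_and_norm_eq (w : FreeGroup S) {i : ℕ} (hi : i ≤ w.norm) :
    ∃ u v, u * v = w ∧ u.norm = i ∧ v.norm + i = w.norm := by
  have hsplit : FreeGroup.IsReduced (w.toWord.take i ++ w.toWord.drop i) := by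
    rw [List.take_append_drop]
    exact FreeGroup.isReduced_toWord
  refine ⟨.mk (w.toWord.take i), .mk (w.toWord.drop i), ?_, ?_, ?_⟩
  · rw [FreeGroup.mul_mk, List.take_append_drop, FreeGroup.mk_toWord]
  · rw [freeGroup_norm_mk (List.IsChain.left_of_append hsplit), List.length_take]
    exact min_eq_left hi
  · rw [freeGroup_norm_mk (List.IsChain.right_of_append hsplit), List.length_drop]
    exact Nat.sub_add_cancel hi

/-- The Cayley tree of a free group with respect to its free generators. -/
def cayleyTree (S : Type*) [DecidableEq S] : DiscreteTree (FreeGroup S) where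
  dist u v := (u⁻¹ * v).norm
  dist_self p := by rw [inv_mul_cancel, FreeGroup.norm_one]
  eq_of_dist_eq_zero h := inv_mul_eq_one.1 (FreeGroup.norm_eq_zero.1 h)
  dist_comm := freeGroup_norm_inv_mul_comm
  four_point a b c e := by
    have translate (u v : FreeGroup S) : (e⁻¹ * u)⁻¹ * (e⁻¹ * v) = u⁻¹ * v := by group
    simpa only [translate, freeGroup_norm_inv_mul_comm e] using
      freeGroup_norm_inv_mul_add_norm_le (e⁻¹ * a) (e⁻¹ * b) (e⁻¹ * c)
  exists_between {p q i} hi := by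
    obtain ⟨u, v, huv, hu, hv⟩ := exists_mul_eq_and_norm_eq (p⁻¹ * q) hi
    refine ⟨p * u, by rwa [inv_mul_cancel_left], ?_⟩
    rwa [mul_inv_rev, mul_assoc, ← huv, inv_mul_cancel_left, huv]
  perimeter_mod_two a b c := by
    have hab := freeGroup_norm_sub_exponentSum_mod_two (a⁻¹ * b)
    have hbc := freeGroup_norm_sub_exponentSum_mod_two (b⁻¹ * c)
    have hac := freeGroup_norm_sub_exponentSum_mod_two (a⁻¹ * c)
    simp only [map_mul, map_inv, toAdd_mul, toAdd_inv] at hab hbc hac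
    omega

end CayleyTree

section AffineAction

variable {N G : Type*} [Group N] [Group G] {φ : G →* MulAut N}

/-- The affine action of a semidirect product on its normal factor: the normal factor acts by left
translations and the complement through `φ`. -/
instance affineMulAction : MulAction (N ⋊[φ] G) N where
  smul g p := g.left * φ g.right p
  one_smul p := by
    change (1 : N ⋊[φ] G).left * φ (1 : N ⋊[φ] G).right p = p
    simp
  mul_smul g h p := by
    change (g * h).left * φ (g * h).right p = g.left * φ g.right (h.left * φ h.right p)
    simp [mul_assoc]

theorem affine_smul_def (g : N ⋊[φ] G) (p : N) : g • p = g.left * φ g.right p :=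
  rfl

theorem affine_smul_mul (g : N ⋊[φ] G) (p w : N) : g • (p * w) = g • p * φ g.right w := by
  rw [affine_smul_def, affine_smul_def, map_mul, mul_assoc]

theorem inv_affine_smul_mul_affine_smul (g : N ⋊[φ] G) (p q : N) :
    (g • p)⁻¹ * g • q = φ g.right (p⁻¹ * q) := by
  rw [inv_mul_eq_iff_eq_mul, ← affine_smul_mul, mul_inv_cancel_left]

theorem eq_of_affine_smul_eq {g h : N ⋊[φ] G} {p : N} (hright : g.right = h.right)
    (hp : g • p = h • p) : g = h := by
  rw [affine_smul_def, affine_smul_def, hright] at hp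
  exact SemidirectProduct.ext (mul_right_cancel hp) hright

theorem commute_of_affine_smul_eq {g h : N ⋊[φ] G} {p : N} (hright : Commute g.right h.right)
    (hp : g • p = p) (hhp : g • h • p = h • p) : Commute g h := by
  refine eq_of_affine_smul_eq (p := p) ?_ ?_
  · rw [SemidirectProduct.mul_right, SemidirectProduct.mul_right, hright.eq]
  · rw [mul_smul, mul_smul, hp, hhp]

theorem semidirectProduct_eq_one_of_pow_eq_one [IsMulTorsionFree N] [IsMulTorsionFree G]
    {x : N ⋊[φ] G} {n : ℕ} (hn : n ≠ 0) (hx : x ^ n = 1) : x = 1 := by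
  have hker : x ∈ (SemidirectProduct.rightHom : N ⋊[φ] G →* G).ker := by
    rw [MonoidHom.mem_ker, ← pow_eq_one_iff_left hn, ← map_pow, hx, map_one]
  rw [← SemidirectProduct.range_inl_eq_ker_rightHom] at hker
  obtain ⟨u, rfl⟩ := hker
  rw [← map_pow, map_eq_one_iff _ SemidirectProduct.inl_injective, pow_eq_one_iff_left hn] at hx
  rw [hx, map_one]

end AffineAction

section RootClosed

variable {G H : Type*} [Group G] [Group H]

/-- A subgroup is root-closed if it contains every element some nontrivial power of which it
contains. -/
def IsRootClosed (C : Subgroup G) : Prop :=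
  ∀ ⦃g : G⦄ ⦃k : ℤ⦄, k ≠ 0 → g ^ k ∈ C → g ∈ C

theorem IsRootClosed.comap {C : Subgroup H} (hC : IsRootClosed C) (f : G →* H) :
    IsRootClosed (C.comap f) := fun g k hk hg ↦ by
  rw [Subgroup.mem_comap, map_zpow] at hg
  exact hC hk hg

theorem IsRootClosed.stabilizer_quotient {C : Subgroup G} (hC : IsRootClosed C) (s : G ⧸ C) :
    IsRootClosed (MulAction.stabilizer G s) := by
  induction s using QuotientGroup.induction_on with
  | H a =>
    have hstab : MulAction.stabilizer G (a : G ⧸ C) = C.comap (MulAut.conj a⁻¹).toMonoidHom := by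
      ext g
      rw [MulAction.mem_stabilizer_iff, MulAction.Quotient.smul_coe, eq_comm, QuotientGroup.eq]
      simp [mul_assoc]
    rw [hstab]
    exact hC.comap _

end RootClosed

section PermAut

variable {B S : Type*} [Group B] [MulAction B S]

/-- The action on the free group on `S` that permutes the free generators. -/
def permAut (B S : Type*) [Group B] [MulAction B S] : B →* MulAut (FreeGroup S) where
  toFun b := FreeGroup.freeGroupCongr (MulAction.toPerm b)
  map_one' := by
    apply MulEquiv.toMonoidHom_injective
    ext s
    simp
  map_mul' a b := by
    apply MulEquiv.toMonoidHom_injective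
    ext s
    simp [mul_smul]

theorem permAut_of (b : B) (s : S) : permAut B S b (FreeGroup.of s) = FreeGroup.of (b • s) := by
  simp [permAut]

theorem exponentSum_permAut (b : B) (w : FreeGroup S) :
    exponentSum S (permAut B S b w) = exponentSum S w := by
  have hcomp : (exponentSum S).comp (permAut B S b).toMonoidHom = exponentSum S := by
    ext s
    simp [exponentSum, permAut_of]
  exact DFunLike.congr_fun hcomp w

theorem toWord_permAut [DecidableEq S] (b : B) (w : FreeGroup S) :
    (permAut B S b w).toWord = w.toWord.map (Prod.map (b • ·) id) := by
  have hmk : permAut B S b w = .mk (w.toWord.map (Prod.map (b • ·) id)) := by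
    conv_lhs => rw [← FreeGroup.mk_toWord (x := w)]
    simp [permAut, Prod.map_def]
  have hred : FreeGroup.IsReduced (w.toWord.map (Prod.map (b • ·) id)) := by
    simpa [FreeGroup.IsReduced, List.isChain_map] using FreeGroup.isReduced_toWord (x := w)
  rw [hmk, FreeGroup.toWord_mk, hred.reduce_eq]

theorem norm_permAut [DecidableEq S] (b : B) (w : FreeGroup S) :
    (permAut B S b w).norm = w.norm := by
  rw [FreeGroup.norm, toWord_permAut, List.length_map, FreeGroup.norm]

theorem permAut_eq_self_iff [DecidableEq S] {b : B} {w : FreeGroup S} :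
    permAut B S b w = w ↔ ∀ p ∈ w.toWord, b ∈ MulAction.stabilizer B p.1 := by
  rw [← FreeGroup.toWord_inj, toWord_permAut]
  nth_rewrite 2 [← List.map_id w.toWord]
  rw [List.map_inj_left]
  simp [Prod.ext_iff]

theorem permAut_eq_self_of_zpow (hroot : ∀ s : S, IsRootClosed (MulAction.stabilizer B s)) {b : B}
    {w : FreeGroup S} {k : ℤ} (hk : k ≠ 0) (h : permAut B S (b ^ k) w = w) :
    permAut B S b w = w := by
  classical
  rw [permAut_eq_self_iff] at h ⊢
  exact fun p hp ↦ hroot p.1 hk (h p hp)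

end PermAut

section PermSemidirect

variable {B S : Type*} [Group B] [MulAction B S]

/-- The semidirect product of the free group on `S` with a group `B` permuting `S`. -/
abbrev PermSemidirect (B S : Type*) [Group B] [MulAction B S] :=
  FreeGroup S ⋊[permAut B S] B

theorem exponentSum_smul (g : PermSemidirect B S) (p : FreeGroup S) :
    exponentSum S (g • p) = exponentSum S g.left * exponentSum S p := by
  rw [affine_smul_def, map_mul, exponentSum_permAut]

theorem isTreeAction_cayleyTree [DecidableEq S]
    (hroot : ∀ s : S, IsRootClosed (MulAction.stabilizer B s)) :
    IsTreeAction (PermSemidirect B S) (cayleyTree S) where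
  dist_smul_smul g p q := by
    change ((g • p)⁻¹ * g • q).norm = (p⁻¹ * q).norm
    rw [inv_affine_smul_mul_affine_smul, norm_permAut]
  smul_smul_ne {g p} hdist hp := by
    -- `g` shifts exponent sums by that of `g.left`, which is odd as `p` and `g • p` are adjacent.
    have hodd := freeGroup_norm_sub_exponentSum_mod_two (p⁻¹ * g • p)
    change (p⁻¹ * g • p).norm = 1 at hdist
    have hsum := congrArg (fun u ↦ (exponentSum S u).toAdd) hp
    simp only [hdist, map_mul, map_inv, exponentSum_smul, toAdd_mul, toAdd_inv] at hodd hsum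
    omega
  smul_eq_of_zpow_smul_eq {g o p k} hk ho hp := by
    have hko : g ^ k • o = o := MulAction.mem_fixedBy_zpow ho k
    have hright : (g ^ k).right = g.right ^ k := map_zpow SemidirectProduct.rightHom g k
    have hfix : permAut B S g.right (o⁻¹ * p) = o⁻¹ * p := by
      refine permAut_eq_self_of_zpow hroot hk ?_
      rw [← hright, ← inv_affine_smul_mul_affine_smul, hko, hp]
    rw [← inv_affine_smul_mul_affine_smul, ho] at hfix
    exact mul_left_cancel hfix

theorem PermSemidirect.isFreePair_of_not_commute
    (hroot : ∀ s : S, IsRootClosed (MulAction.stabilizer B s)) {x y : PermSemidirect B S}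
    (hright : Commute x.right y.right) (hxy : ¬Commute x y) : IsFreePair x y := by
  classical
  refine (isTreeAction_cayleyTree hroot).isFreePair_of_forall_smul_smul_ne
    fun a b hab p hp hbp ↦ hxy (hab.commute_iff.1 ?_)
  exact commute_of_affine_smul_eq ((hab.map SemidirectProduct.rightHom).commute_iff.2 hright) hp hbp

end PermSemidirect

section Baudisch

variable {G H : Type*} [Group G] [Group H]

/-- The two properties of partially commutative groups established by induction on the number of
vertices: roots are unique, and (Baudisch's theorem) any two elements commute or freely generate a
free group. -/
structure IsBaudisch (G : Type*) [Group G] : Prop extends IsMulTorsionFree G where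
  commute_or_isFreePair (x y : G) : Commute x y ∨ IsFreePair x y

theorem IsFreePair.pow_ne_pow {x y : G} (h : IsFreePair x y) {n : ℕ} (hn : n ≠ 0) :
    x ^ n ≠ y ^ n := fun hxy ↦ by
  have hof : FreeGroup.of (0 : Fin 2) ^ n = FreeGroup.of 1 ^ n := h (by simpa using hxy)
  exact zero_ne_one (FreeGroup.of_injective (pow_left_injective hn hof))

theorem IsBaudisch.of_pow_eq_one (hpow : ∀ (x : G) (n : ℕ), n ≠ 0 → x ^ n = 1 → x = 1)
    (halt : ∀ x y : G, Commute x y ∨ IsFreePair x y) : IsBaudisch G where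
  commute_or_isFreePair := halt
  pow_left_injective n hn x y hxy := by
    obtain hcomm | hfree := halt x y
    · refine mul_inv_eq_one.1 (hpow _ n hn ?_)
      rw [hcomm.inv_right.mul_pow, inv_pow, mul_inv_eq_one]
      exact hxy
    · exact absurd hxy (hfree.pow_ne_pow hn)

theorem IsBaudisch.of_injective (h : IsBaudisch H) {f : G →* H} (hf : Function.Injective f) :
    IsBaudisch G where
  pow_left_injective n hn x y hxy :=
    hf (h.pow_left_injective hn (by simpa only [map_pow] using congrArg f hxy))
  commute_or_isFreePair x y :=
    (h.commute_or_isFreePair (f x) (f y)).imp (fun hc ↦ hf (by rw [map_mul, map_mul, hc.eq]))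
      (IsFreePair.of_map f)

theorem PermSemidirect.isBaudisch {B S : Type*} [Group B] [MulAction B S] (hB : IsBaudisch B)
    (hroot : ∀ s : S, IsRootClosed (MulAction.stabilizer B s)) :
    IsBaudisch (PermSemidirect B S) := by
  have := hB.toIsMulTorsionFree
  refine .of_pow_eq_one (fun x n ↦ semidirectProduct_eq_one_of_pow_eq_one) fun x y ↦ ?_
  obtain hright | hright := hB.commute_or_isFreePair x.right y.right
  · exact or_iff_not_imp_left.2 (isFreePair_of_not_commute hroot hright)
  · exact .inr (.of_map SemidirectProduct.rightHom hright)

end Baudisch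

section CentralizerExtension

variable {B G : Type*} [Group B] [Group G] {C : Subgroup B}

/-- The HNN extension of `B` by a stable letter centralizing `C`. Its generator of the free factor
indexed by the coset of `b` is the conjugate by `b` of the stable letter. -/
abbrev CentralizerExtension (C : Subgroup B) :=
  PermSemidirect B (B ⧸ C)

namespace CentralizerExtension

/-- The stable letter of a centralizer extension. -/
def stableLetter (C : Subgroup B) : CentralizerExtension C :=
  SemidirectProduct.inl (FreeGroup.of (1 : B))

theorem commute_inr_stableLetter {c : B} (hc : c ∈ C) :
    Commute (SemidirectProduct.inr c) (stableLetter C) := by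
  have hcoset : (c : B ⧸ C) = (1 : B) := QuotientGroup.eq.2 (by simpa using hc)
  have hconj := SemidirectProduct.inl_aut (φ := permAut B (B ⧸ C)) c (FreeGroup.of (1 : B))
  rw [permAut_of, MulAction.Quotient.smul_coe, smul_eq_mul, mul_one, hcoset, map_inv,
    eq_mul_inv_iff_mul_eq] at hconj
  exact hconj.symm

/-- The conjugate of `t` by `i b`, as a function of the coset of `b`. -/
def cosetConj (i : B →* G) (t : G) (h : ∀ c ∈ C, Commute (i c) t) (s : B ⧸ C) : G :=
  Quotient.liftOn' s (fun b ↦ MulAut.conj (i b) t) fun a b hab ↦ by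
    have hcomm := (h _ (QuotientGroup.leftRel_apply.1 hab)).eq
    rw [← mul_inv_cancel_left a b, map_mul, map_mul, MulAut.mul_apply,
      MulAut.conj_apply (i (a⁻¹ * b)), hcomm, mul_inv_cancel_right]

theorem cosetConj_coe (i : B →* G) (t : G) (h : ∀ c ∈ C, Commute (i c) t) (b : B) :
    cosetConj i t h b = i b * t * (i b)⁻¹ :=
  rfl

/-- The universal property of a centralizer extension. -/
def lift (i : B →* G) (t : G) (h : ∀ c ∈ C, Commute (i c) t) : CentralizerExtension C →* G :=
  SemidirectProduct.lift (FreeGroup.lift (cosetConj i t h)) i fun b ↦ by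
    refine FreeGroup.ext_hom _ _ fun s ↦ ?_
    induction s using QuotientGroup.induction_on with
    | H a =>
      simp only [MonoidHom.comp_apply, MulEquiv.coe_toMonoidHom, permAut_of,
        FreeGroup.lift_apply_of, MulAction.Quotient.smul_coe, smul_eq_mul, MulAut.conj_apply,
        cosetConj_coe, map_mul]
      group

theorem lift_inr (i : B →* G) (t : G) (h : ∀ c ∈ C, Commute (i c) t) (b : B) :
    lift i t h (SemidirectProduct.inr b) = i b :=
  SemidirectProduct.lift_inr _ _ _ b

theorem lift_stableLetter (i : B →* G) (t : G) (h : ∀ c ∈ C, Commute (i c) t) :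
    lift i t h (stableLetter C) = t := by
  rw [lift, stableLetter, SemidirectProduct.lift_inl, FreeGroup.lift_apply_of, cosetConj_coe,
    map_one, one_mul, inv_one, mul_one]

theorem isBaudisch (hB : IsBaudisch B) (hC : IsRootClosed C) :
    IsBaudisch (CentralizerExtension C) :=
  PermSemidirect.isBaudisch hB hC.stabilizer_quotient

end CentralizerExtension

end CentralizerExtension

theorem isRootClosed_range_of_leftInverse {G H : Type*} [Group G] [Group H] [IsMulTorsionFree G]
    {f : H →* G} {r : G →* H} (hr : Function.LeftInverse r f) : IsRootClosed f.range := by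
  rintro g k hk ⟨x, hx⟩
  refine ⟨r g, zpow_left_injective hk ?_⟩
  change f (r g) ^ k = g ^ k
  rw [← map_zpow, ← map_zpow, ← hx, hr x]

theorem IsBaudisch.of_local {G : Type*} [Group G]
    (h : ∀ x y : G, ∃ K : Subgroup G, x ∈ K ∧ y ∈ K ∧ IsBaudisch K) : IsBaudisch G where
  pow_left_injective n hn x y hxy := by
    obtain ⟨K, hx, hy, hK⟩ := h x y
    have hpow : (⟨x, hx⟩ : K) ^ n = ⟨y, hy⟩ ^ n := Subtype.ext hxy
    exact congrArg Subtype.val (hK.pow_left_injective hn hpow)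
  commute_or_isFreePair x y := by
    obtain ⟨K, hx, hy, hK⟩ := h x y
    exact (hK.commute_or_isFreePair ⟨x, hx⟩ ⟨y, hy⟩).imp (fun hc ↦ hc.map K.subtype)
      fun hf ↦ hf.map K.subtype_injective

namespace Raag

variable {V W G : Type*} [Group G] {Γ : SimpleGraph V}

/-- The generator of a partially commutative group given by a vertex. -/
def of (Γ : SimpleGraph V) (v : V) : Raag Γ :=
  PresentedGroup.of v

theorem commute_of_adj {u v : V} (h : Γ.Adj u v) : Commute (of Γ u) (of Γ v) := by
  have hrel := PresentedGroup.one_of_mem (rels := raagRels Γ) ⟨u, v, h, rfl⟩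
  simp only [map_mul, map_inv] at hrel
  rwa [mul_inv_eq_one, mul_inv_eq_iff_eq_mul] at hrel

/-- The universal property of a partially commutative group. -/
def lift (f : V → G) (hf : ∀ u v, Γ.Adj u v → Commute (f u) (f v)) : Raag Γ →* G :=
  PresentedGroup.toGroup (f := f) <| by
    rintro r ⟨u, v, h, rfl⟩
    simp only [map_mul, map_inv, FreeGroup.lift_apply_of]
    rw [mul_inv_eq_one, mul_inv_eq_iff_eq_mul]
    exact hf u v h

theorem lift_of (f : V → G) (hf : ∀ u v, Γ.Adj u v → Commute (f u) (f v)) (v : V) :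
    lift f hf (of Γ v) = f v :=
  PresentedGroup.toGroup.of _

theorem hom_ext {f g : Raag Γ →* G} (h : ∀ v, f (of Γ v) = g (of Γ v)) : f = g :=
  PresentedGroup.ext h

theorem closure_range_of (Γ : SimpleGraph V) : Subgroup.closure (Set.range (of Γ)) = ⊤ :=
  PresentedGroup.closure_range_of _

theorem leftInverse_of_forall_of {f : Raag Γ →* G} {r : G →* Raag Γ}
    (h : ∀ v, r (f (of Γ v)) = of Γ v) : Function.LeftInverse r f := fun x ↦
  DFunLike.congr_fun (hom_ext (f := r.comp f) (g := MonoidHom.id _) h) x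

/-- The homomorphism induced by the inclusion of a full subgraph. -/
def comapInclusion (Γ : SimpleGraph V) (j : W → V) : Raag (Γ.comap j) →* Raag Γ :=
  lift (fun w ↦ of Γ (j w)) fun _ _ h ↦ commute_of_adj (Γ := Γ) h

theorem comapInclusion_of (Γ : SimpleGraph V) (j : W → V) (w : W) :
    comapInclusion Γ j (of _ w) = of Γ (j w) :=
  lift_of _ _ w

theorem exists_leftInverse_comapInclusion (Γ : SimpleGraph V) {j : W → V}
    (hj : Function.Injective j) :
    ∃ r : Raag Γ →* Raag (Γ.comap j), Function.LeftInverse r (comapInclusion Γ j) := by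
  have hcomm (u v : V) (huv : Γ.Adj u v) : Commute (Function.extend j (of (Γ.comap j)) 1 u)
      (Function.extend j (of (Γ.comap j)) 1 v) := by
    by_cases hu : ∃ w, j w = u
    · by_cases hv : ∃ w, j w = v
      · obtain ⟨u, rfl⟩ := hu
        obtain ⟨v, rfl⟩ := hv
        rw [hj.extend_apply, hj.extend_apply]
        exact commute_of_adj huv
      · rw [Function.extend_apply' _ _ v hv]
        exact .one_right _
    · rw [Function.extend_apply' _ _ u hu]
      exact .one_left _
  refine ⟨lift _ hcomm, leftInverse_of_forall_of fun w ↦ ?_⟩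
  rw [comapInclusion_of, lift_of, hj.extend_apply]

theorem comapInclusion_injective (Γ : SimpleGraph V) {j : W → V} (hj : Function.Injective j) :
    Function.Injective (comapInclusion Γ j) :=
  (exists_leftInverse_comapInclusion Γ hj).choose_spec.injective

/-- The special subgroup generated by a set of vertices. -/
def special (Γ : SimpleGraph V) (s : Set V) : Subgroup (Raag Γ) :=
  Subgroup.closure (of Γ '' s)

theorem of_mem_special {s : Set V} {v : V} (hv : v ∈ s) : of Γ v ∈ special Γ s :=
  Subgroup.subset_closure (Set.mem_image_of_mem _ hv)

theorem special_mono {s t : Set V} (h : s ⊆ t) : special Γ s ≤ special Γ t :=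
  Subgroup.closure_mono (Set.image_mono h)

theorem range_comapInclusion (Γ : SimpleGraph V) (j : W → V) :
    (comapInclusion Γ j).range = special Γ (Set.range j) := by
  rw [MonoidHom.range_eq_map, ← closure_range_of, MonoidHom.map_closure, special,
    ← Set.range_comp, ← Set.range_comp]
  exact congrArg (fun f ↦ Subgroup.closure (Set.range f)) (funext (comapInclusion_of Γ j))

theorem isRootClosed_special (h : IsBaudisch (Raag Γ)) (s : Set V) :
    IsRootClosed (special Γ s) := by
  have := h.toIsMulTorsionFree
  obtain ⟨r, hr⟩ := exists_leftInverse_comapInclusion Γ (Subtype.val_injective (p := (· ∈ s)))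
  simpa [range_comapInclusion] using isRootClosed_range_of_leftInverse hr

theorem exists_finite_mem_special (x : Raag Γ) : ∃ s : Set V, s.Finite ∧ x ∈ special Γ s := by
  have hx : x ∈ Subgroup.closure (Set.range (of Γ)) := closure_range_of Γ ▸ Subgroup.mem_top x
  induction hx using Subgroup.closure_induction with
  | mem x hx =>
    obtain ⟨v, rfl⟩ := hx
    exact ⟨{v}, Set.finite_singleton v, of_mem_special rfl⟩
  | one => exact ⟨∅, Set.finite_empty, one_mem _⟩
  | mul x y _ _ hx hy =>
    obtain ⟨s, hs, hx⟩ := hx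
    obtain ⟨t, ht, hy⟩ := hy
    exact ⟨s ∪ t, hs.union ht, mul_mem (special_mono Set.subset_union_left hx)
      (special_mono Set.subset_union_right hy)⟩
  | inv x _ hx =>
    obtain ⟨s, hs, hx⟩ := hx
    exact ⟨s, hs, inv_mem hx⟩

section Option

variable (Γ : SimpleGraph (Option W))

/-- The special subgroup generated by the neighbours of `none` in the group of the graph obtained by
deleting `none`. -/
def link : Subgroup (Raag (Γ.comap some)) :=
  special (Γ.comap some) {u | Γ.Adj none (some u)}

theorem commute_comapInclusion_of_none {c : Raag (Γ.comap some)} (hc : c ∈ link Γ) :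
    Commute (comapInclusion Γ some c) (of Γ none) := by
  have hle : link Γ ≤ (Subgroup.centralizer {of Γ none}).comap (comapInclusion Γ some) := by
    rw [link, special, Subgroup.closure_le]
    rintro _ ⟨u, hu, rfl⟩
    rw [SetLike.mem_coe, Subgroup.mem_comap, Subgroup.mem_centralizer_singleton_iff,
      comapInclusion_of]
    exact (commute_of_adj hu).symm
  exact Subgroup.mem_centralizer_singleton_iff.1 (hle hc)

/-- The images of the vertices when `none` is split off as the stable letter of an extension
centralizing its link. -/
def splitVertex : Option W → CentralizerExtension (link Γ)
  | none => .stableLetter _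
  | some u => SemidirectProduct.inr (of _ u)

theorem splitVertex_commute {u v : Option W} (h : Γ.Adj u v) :
    Commute (splitVertex Γ u) (splitVertex Γ v) := by
  have hnone {w : W} (hw : Γ.Adj none (some w)) :
      Commute (splitVertex Γ (some w)) (splitVertex Γ none) :=
    CentralizerExtension.commute_inr_stableLetter (of_mem_special hw)
  cases u with
  | none =>
    cases v with
    | none => exact absurd h Γ.irrefl
    | some v => exact (hnone h).symm
  | some u =>
    cases v with
    | none => exact hnone h.symm
    | some v => exact (commute_of_adj (Γ := Γ.comap some) h).map SemidirectProduct.inr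

/-- The embedding of a partially commutative group that splits off the vertex `none`. -/
def toCentralizerExtension : Raag Γ →* CentralizerExtension (link Γ) :=
  lift (splitVertex Γ) fun _ _ ↦ splitVertex_commute Γ

theorem toCentralizerExtension_injective : Function.Injective (toCentralizerExtension Γ) := by
  let r := CentralizerExtension.lift (comapInclusion Γ some) (of Γ none) fun _ ↦
    commute_comapInclusion_of_none Γ
  refine (leftInverse_of_forall_of (r := r) fun v ↦ ?_).injective
  rw [toCentralizerExtension, lift_of]
  cases v with
  | none => exact CentralizerExtension.lift_stableLetter _ _ _
  | some u => exact (CentralizerExtension.lift_inr _ _ _ _).trans (comapInclusion_of _ _ _)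

theorem isBaudisch_option (h : IsBaudisch (Raag (Γ.comap some))) : IsBaudisch (Raag Γ) :=
  (CentralizerExtension.isBaudisch h (isRootClosed_special h _)).of_injective
    (toCentralizerExtension_injective Γ)

end Option

theorem isBaudisch_of_finite [Finite V] (Γ : SimpleGraph V) : IsBaudisch (Raag Γ) := by
  induction V using Finite.induction_empty_option with
  | of_equiv e h =>
    have hcomap : (Γ.comap e).comap e.symm = Γ := by
      ext u v
      simp
    exact hcomap ▸ (h (Γ.comap e)).of_injective (comapInclusion_injective _ e.symm.injective)
  | h_empty =>
    have : Subsingleton (Raag Γ) := by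
      rw [← Subgroup.subsingleton_iff]
      refine subsingleton_of_bot_eq_top ?_
      rw [← closure_range_of Γ, Set.range_eq_empty, Subgroup.closure_empty]
    exact .of_pow_eq_one (fun _ _ _ _ ↦ Subsingleton.elim _ _) fun x y ↦
      .inl (Subsingleton.elim _ _)
  | h_option h => exact isBaudisch_option Γ (h _)

theorem isBaudisch_special_of_finite (Γ : SimpleGraph V) {s : Set V} (hs : s.Finite) :
    IsBaudisch (special Γ s) := by
  have := hs.to_subtype
  have hj : Function.Injective (comapInclusion Γ ((↑) : s → V)) :=
    comapInclusion_injective Γ Subtype.val_injective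
  have hrange : (comapInclusion Γ ((↑) : s → V)).range = special Γ s := by
    rw [range_comapInclusion, Subtype.range_coe]
  rw [← hrange]
  exact (isBaudisch_of_finite _).of_injective (f := (MonoidHom.ofInjective hj).symm.toMonoidHom)
    (MonoidHom.ofInjective hj).symm.injective

theorem isBaudisch (Γ : SimpleGraph V) : IsBaudisch (Raag Γ) := by
  refine .of_local fun x y ↦ ?_
  obtain ⟨s, hs, hx⟩ := exists_finite_mem_special x
  obtain ⟨t, ht, hy⟩ := exists_finite_mem_special y
  exact ⟨special Γ (s ∪ t), special_mono Set.subset_union_left hx,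
    special_mono Set.subset_union_right hy, isBaudisch_special_of_finite Γ (hs.union ht)⟩

end Raag

section TwoGenerated

theorem exists_injective_linearMap_pi_of_span_range_eq_top {R M ι : Type*} [CommRing R]
    [IsDomain R] [IsPrincipalIdealRing R] [AddCommGroup M] [Module R M] [Module.IsTorsionFree R M]
    [Finite ι] {v : ι → M} (hv : Submodule.span R (Set.range v) = ⊤) :
    ∃ f : M →ₗ[R] ι → R, Function.Injective f := by
  have := Fintype.ofFinite ι
  have : Module.Finite R M := ⟨hv ▸ Submodule.fg_span (Set.finite_range v)⟩
  refine finrank_le_iff_exists_linearMap.1 ?_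
  calc
    Module.finrank R M = (Set.range v).finrank R := by rw [Set.finrank, hv, finrank_top]
    _ ≤ Fintype.card ι := finrank_range_le_card v
    _ = Module.finrank R (ι → R) := (Module.finrank_fintype_fun_eq_card R).symm

theorem exists_injective_hom_of_closure_pair_eq_top {A : Type*} [CommGroup A] [IsMulTorsionFree A]
    {a b : A} (h : Subgroup.closure {a, b} = ⊤) :
    ∃ f : A →* Multiplicative ℤ × Multiplicative ℤ, Function.Injective f := by
  have hspan : Submodule.span ℤ (Set.range ![Additive.ofMul a, Additive.ofMul b]) = ⊤ := by
    refine eq_top_iff.2 fun x _ ↦ ?_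
    have hx : x.toMul ∈ Subgroup.closure {a, b} := h ▸ Subgroup.mem_top _
    obtain ⟨m, n, hmn⟩ := Subgroup.mem_closure_pair.1 hx
    rw [Matrix.range_cons_cons_empty, Submodule.mem_span_pair]
    exact ⟨m, n, congrArg Additive.ofMul hmn⟩
  obtain ⟨f, hf⟩ := exists_injective_linearMap_pi_of_span_range_eq_top hspan
  let e := (LinearEquiv.finTwoArrow ℤ ℤ).toAddEquiv
  exact ⟨(MulEquiv.prodMultiplicative ℤ ℤ).toMonoidHom.comp
    (AddMonoidHom.toMultiplicativeRight (e.toAddMonoidHom.comp f.toAddMonoidHom)),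
    (MulEquiv.prodMultiplicative ℤ ℤ).injective.comp (e.injective.comp hf)⟩

variable {G : Type*} [Group G] {a b : G}

open scoped IsMulCommutative in
theorem exists_injective_hom_closure_pair_of_commute [IsMulTorsionFree G] (h : Commute a b) :
    ∃ f : Subgroup.closure {a, b} →* Multiplicative ℤ × Multiplicative ℤ,
      Function.Injective f := by
  have : IsMulCommutative (Subgroup.closure {a, b}) := Subgroup.isMulCommutative_closure <| by
    rintro x (rfl | rfl) y (rfl | rfl)
    exacts [rfl, h.eq, h.eq.symm, rfl]
  have ha : a ∈ Subgroup.closure {a, b} := Subgroup.mem_closure_of_mem (.inl rfl)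
  have hb : b ∈ Subgroup.closure {a, b} := Subgroup.mem_closure_of_mem (.inr rfl)
  refine exists_injective_hom_of_closure_pair_eq_top (a := ⟨a, ha⟩) (b := ⟨b, hb⟩) ?_
  rw [← Subgroup.closure_closure_coe_preimage (k := {a, b})]
  congr 1
  ext x
  simp [Subtype.ext_iff]

theorem IsFreePair.exists_injective_hom_closure_pair (h : IsFreePair a b) :
    ∃ f : Subgroup.closure {a, b} →* FreeGroup (Fin 2), Function.Injective f := by
  have hrange : Subgroup.closure {a, b} = (FreeGroup.lift ![a, b]).range := by
    rw [FreeGroup.range_lift_eq_closure, Matrix.range_cons_cons_empty]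
  let e := (MulEquiv.subgroupCongr hrange).trans (MonoidHom.ofInjective h).symm
  exact ⟨e.toMonoidHom, e.injective⟩

end TwoGenerated

namespace Raag

variable {V : Type*} {Γ : SimpleGraph V} {u v : V}

theorem isFreePair_of_not_adj (hne : u ≠ v) (h : ¬ Γ.Adj u v) :
    IsFreePair (of Γ u) (of Γ v) := by
  classical
  let f : V → FreeGroup (Fin 2) := Function.update (Pi.mulSingle u (.of 0)) v (.of 1)
  have hone {w : V} (hwu : w ≠ u) (hwv : w ≠ v) : f w = 1 := by simp [f, hwu, hwv]
  have hf (a b : V) (hab : Γ.Adj a b) : Commute (f a) (f b) := by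
    rcases eq_or_ne a u with rfl | hau
    · rw [hone hab.ne' fun hbv ↦ h (hbv ▸ hab)]
      exact .one_right _
    rcases eq_or_ne a v with rfl | hav
    · rw [hone (fun hbu ↦ h (hbu ▸ hab.symm)) hab.ne']
      exact .one_right _
    · rw [hone hau hav]
      exact .one_left _
  have hid : FreeGroup.lift ![f u, f v] = MonoidHom.id (FreeGroup (Fin 2)) := by
    ext i
    fin_cases i <;> simp [f, hne]
  refine .of_map (lift f hf) ?_
  rw [lift_of, lift_of, IsFreePair, hid]
  exact Function.injective_id

theorem exists_injective_hom_of_adj (h : Γ.Adj u v) :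
    ∃ f : Multiplicative ℤ × Multiplicative ℤ →* Raag Γ, Function.Injective f := by
  classical
  let f : V → Multiplicative ℤ × Multiplicative ℤ :=
    Function.update (Pi.mulSingle u (.ofAdd 1, 1)) v (1, .ofAdd 1)
  let r := lift (Γ := Γ) f fun _ _ _ ↦ .all _ _
  have hru : r (of Γ u) = (.ofAdd 1, 1) := by simp [r, lift_of, f, h.ne]
  have hrv : r (of Γ v) = (1, .ofAdd 1) := by simp [r, lift_of, f]
  have hcomm (m n : Multiplicative ℤ) :
      Commute (zpowersHom _ (of Γ u) m) (zpowersHom _ (of Γ v) n) :=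
    (commute_of_adj h).zpow_zpow _ _
  refine ⟨.noncommCoprod _ _ hcomm, Function.LeftInverse.injective (g := r) fun ⟨m, n⟩ ↦ ?_⟩
  simp only [MonoidHom.noncommCoprod_apply, zpowersHom_apply, map_mul, map_zpow, hru, hrv]
  ext <;> simp [← ofAdd_zsmul]

end Raag

theorem exists_two_universal_pc_group_general {V : Type*} (Γ : SimpleGraph V) (a b : Raag Γ) :
    ∃ φ : Subgroup.closure {a, b} →* Raag (SimpleGraph.edge (0 : Fin 3) 1),
      Function.Injective φ := by
  rcases (Raag.isBaudisch Γ).commute_or_isFreePair a b with hcomm | hfree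
  · have := (Raag.isBaudisch Γ).toIsMulTorsionFree
    have hadj : (SimpleGraph.edge (0 : Fin 3) 1).Adj 0 1 := by simp [SimpleGraph.edge_adj]
    obtain ⟨f, hf⟩ := exists_injective_hom_closure_pair_of_commute hcomm
    obtain ⟨g, hg⟩ := Raag.exists_injective_hom_of_adj hadj
    exact ⟨g.comp f, hg.comp hf⟩
  · have hadj : ¬ (SimpleGraph.edge (0 : Fin 3) 1).Adj 0 2 := by simp [SimpleGraph.edge_adj]
    obtain ⟨f, hf⟩ := hfree.exists_injective_hom_closure_pair
    exact ⟨(FreeGroup.lift _).comp f, (Raag.isFreePair_of_not_adj (by decide) hadj).comp hf⟩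

theorem exists_two_universal_pc_group :
    ∃ (m : ℕ) (Δ : SimpleGraph (Fin m)),
      ∀ (V : Type) (Γ : SimpleGraph V) (K : Subgroup (Raag Γ)),
        (∃ a b : Raag Γ, K = Subgroup.closure ({a, b} : Set (Raag Γ))) →
        ∃ φ : K →* Raag Δ, Function.Injective φ := by
  refine ⟨3, SimpleGraph.edge 0 1, ?_⟩
  rintro V Γ _ ⟨a, b, rfl⟩
  exact exists_two_universal_pc_group_general Γ a b
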